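/- (Avalanche Principle) Let A₁, …, A_m be arbitrary 2×2 complex matrices with determinant 1. Suppose that min_{1≤j≤m} ‖A_j‖ ≥ μ ≥ m and max_{1≤j<m} [log‖A_{j+1}‖ + log‖A_j‖ − log‖A_{j+1}A_j‖] < (1/2) log μ. Then |log‖A_m ⋯ A₁‖ + Σ_{j=2}^{m−1} log‖A_j‖ − Σ_{j=1}^{m−1} log‖A_{j+1}A_j‖| < C_A · m/μ, where C_A is an absolute constant. -/

import Mathlib

open Matrix

noncomputable section

attribute [local instance] Matrix.linftyOpNormedAddCommGroup Matrix.linftyOpNormedRing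

/-- `prodDesc A n = A (n-1) * ⋯ * A 1 * A 0`. -/
def prodDesc (A : ℕ → Matrix (Fin 2) (Fin 2) ℂ) : ℕ → Matrix (Fin 2) (Fin 2) ℂ
  | 0 => 1
  | n + 1 => A n * prodDesc A n

/-- The `ℓ¹` norm of a row of a `2 × 2` matrix. -/
def rowNorm (M : Matrix (Fin 2) (Fin 2) ℂ) (i : Fin 2) : ℝ := ‖M i 0‖ + ‖M i 1‖

/-- The sum of the moduli of all entries of a `2 × 2` matrix. -/
def entrySum (M : Matrix (Fin 2) (Fin 2) ℂ) : ℝ := rowNorm M 0 + rowNorm M 1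

lemma rowNorm_nonneg (M : Matrix (Fin 2) (Fin 2) ℂ) (i : Fin 2) : 0 ≤ rowNorm M i := by
  unfold rowNorm; positivity

lemma norm_eq_max_rowNorm (M : Matrix (Fin 2) (Fin 2) ℂ) :
    ‖M‖ = max (rowNorm M 0) (rowNorm M 1) := by
  rw [Matrix.linfty_opNorm_def]
  simp [rowNorm, Finset.sup, Fin.univ_succ]

lemma rowNorm_le_norm (M : Matrix (Fin 2) (Fin 2) ℂ) (i : Fin 2) : rowNorm M i ≤ ‖M‖ := by
  rw [norm_eq_max_rowNorm]
  fin_cases i <;> simp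

lemma exists_norm_eq_rowNorm (M : Matrix (Fin 2) (Fin 2) ℂ) : ∃ k, ‖M‖ = rowNorm M k := by
  rw [norm_eq_max_rowNorm]
  rcases max_choice (rowNorm M 0) (rowNorm M 1) with h | h
  exacts [⟨0, h⟩, ⟨1, h⟩]

lemma entrySum_eq (M : Matrix (Fin 2) (Fin 2) ℂ) (k : Fin 2) :
    entrySum M = rowNorm M k + rowNorm M (k + 1) := by
  fin_cases k <;> simp [entrySum, add_comm]

lemma rowNorm_eq (M : Matrix (Fin 2) (Fin 2) ℂ) (i k : Fin 2) :
    rowNorm M i = ‖M i k‖ + ‖M i (k + 1)‖ := by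
  fin_cases k <;> simp [rowNorm, add_comm]

lemma norm_le_entrySum (M : Matrix (Fin 2) (Fin 2) ℂ) : ‖M‖ ≤ entrySum M := by
  obtain ⟨k, hk⟩ := exists_norm_eq_rowNorm M
  rw [hk, entrySum_eq M k]
  linarith [rowNorm_nonneg M (k + 1)]

lemma entrySum_le (M : Matrix (Fin 2) (Fin 2) ℂ) : entrySum M ≤ 2 * ‖M‖ := by
  unfold entrySum
  linarith [rowNorm_le_norm M 0, rowNorm_le_norm M 1]

/-- For unimodular `B` the tensors `(X B) ⊗ (B Y)` and `(X B Y) ⊗ B` differ by a term that does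
not involve `B`. -/
lemma norm_mul_sub_mul_entry (X B Y : Matrix (Fin 2) (Fin 2) ℂ) (hB : B.det = 1)
    (i k j l : Fin 2) :
    ‖(X * B) i j * (B * Y) k l - (X * (B * Y)) i l * B k j‖ =
      ‖X i (k + 1)‖ * ‖Y (j + 1) l‖ := by
  rw [Matrix.det_fin_two] at hB
  rw [← norm_mul]
  have key : (X * B) i j * (B * Y) k l - (X * (B * Y)) i l * B k j = X i (k + 1) * Y (j + 1) l ∨
      (X * B) i j * (B * Y) k l - (X * (B * Y)) i l * B k j = -(X i (k + 1) * Y (j + 1) l) := by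
    fin_cases k <;> fin_cases j <;> simp [Matrix.mul_apply, Fin.sum_univ_two]
    · right; linear_combination (-(X i 1 * Y 1 l)) * hB
    · left; linear_combination (X i 1 * Y 0 l) * hB
    · left; linear_combination (X i 0 * Y 1 l) * hB
    · right; linear_combination (-(X i 0 * Y 0 l)) * hB
  rcases key with h | h <;> simp [h]

lemma rowNorm_mul_rowNorm_le (X B Y : Matrix (Fin 2) (Fin 2) ℂ) (hB : B.det = 1) (i k : Fin 2) :
    rowNorm (X * B) i * rowNorm (B * Y) k ≤
      rowNorm (X * (B * Y)) i * rowNorm B k + ‖X i (k + 1)‖ * entrySum Y := by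
  have h (j l : Fin 2) : ‖(X * B) i j‖ * ‖(B * Y) k l‖ ≤
      ‖(X * (B * Y)) i l‖ * ‖B k j‖ + ‖X i (k + 1)‖ * ‖Y (j + 1) l‖ := by
    rw [← norm_mul_sub_mul_entry X B Y hB, ← norm_mul, ← norm_mul]
    linarith [norm_sub_norm_le ((X * B) i j * (B * Y) k l) ((X * (B * Y)) i l * B k j)]
  have h00 := h 0 0
  have h01 := h 0 1
  have h10 := h 1 0
  have h11 := h 1 1
  simp only [zero_add, show (1 + 1 : Fin 2) = 0 from rfl] at h00 h01 h10 h11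
  unfold entrySum rowNorm
  linarith

lemma rowNorm_mul_rowNorm_ge (X B Y : Matrix (Fin 2) (Fin 2) ℂ) (hB : B.det = 1) (i k : Fin 2) :
    rowNorm (X * (B * Y)) i * rowNorm B k ≤
      rowNorm (X * B) i * rowNorm (B * Y) k + ‖X i (k + 1)‖ * entrySum Y := by
  have h (j l : Fin 2) : ‖(X * (B * Y)) i l‖ * ‖B k j‖ ≤
      ‖(X * B) i j‖ * ‖(B * Y) k l‖ + ‖X i (k + 1)‖ * ‖Y (j + 1) l‖ := by
    rw [← norm_mul_sub_mul_entry X B Y hB, ← norm_mul, ← norm_mul, norm_sub_rev]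
    linarith [norm_sub_norm_le ((X * (B * Y)) i l * B k j) ((X * B) i j * (B * Y) k l)]
  have h00 := h 0 0
  have h01 := h 0 1
  have h10 := h 1 0
  have h11 := h 1 1
  simp only [zero_add, show (1 + 1 : Fin 2) = 0 from rfl] at h00 h01 h10 h11
  unfold entrySum rowNorm
  linarith

lemma norm_entry_mul_rowNorm_le (X W : Matrix (Fin 2) (Fin 2) ℂ) (i k : Fin 2) :
    ‖X i (k + 1)‖ * rowNorm W (k + 1) ≤ rowNorm (X * W) i + ‖X i k‖ * rowNorm W k := by
  have h (l : Fin 2) : ‖X i (k + 1)‖ * ‖W (k + 1) l‖ ≤ ‖(X * W) i l‖ + ‖X i k‖ * ‖W k l‖ := by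
    have e : X i (k + 1) * W (k + 1) l = (X * W) i l - X i k * W k l := by
      fin_cases k <;> simp [Matrix.mul_apply, Fin.sum_univ_two]
    rw [← norm_mul, ← norm_mul, e]
    exact norm_sub_le _ _
  unfold rowNorm
  linarith [h 0, h 1]

lemma norm_entry_le_norm (X : Matrix (Fin 2) (Fin 2) ℂ) (i k : Fin 2) : ‖X i k‖ ≤ ‖X‖ := by
  have h := rowNorm_le_norm X i
  rw [rowNorm_eq X i k] at h
  linarith [norm_nonneg (X i (k + 1))]

lemma exists_norm_mul_norm_le (X B Y : Matrix (Fin 2) (Fin 2) ℂ) (hB : B.det = 1) :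
    ∃ ξ : ℝ, 0 ≤ ξ ∧ ξ ≤ ‖X‖ ∧
      ‖X * B‖ * ‖B * Y‖ ≤ ‖X * (B * Y)‖ * ‖B‖ + ξ * entrySum Y ∧
      ξ * entrySum (B * Y) ≤ ‖X * (B * Y)‖ + ‖X‖ * ‖B * Y‖ := by
  obtain ⟨i, hi⟩ := exists_norm_eq_rowNorm (X * B)
  obtain ⟨k, hk⟩ := exists_norm_eq_rowNorm (B * Y)
  refine ⟨‖X i (k + 1)‖, norm_nonneg _, norm_entry_le_norm _ _ _, ?_, ?_⟩
  · rw [hi, hk]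
    refine (rowNorm_mul_rowNorm_le X B Y hB i k).trans ?_
    gcongr
    · exact rowNorm_nonneg _ _
    · exact rowNorm_le_norm _ _
    · exact rowNorm_le_norm _ _
  · have h1 := norm_entry_mul_rowNorm_le X (B * Y) i k
    have h2 := rowNorm_le_norm (X * (B * Y)) i
    have h3 : rowNorm X i * ‖B * Y‖ ≤ ‖X‖ * ‖B * Y‖ := by
      gcongr
      exact rowNorm_le_norm _ _
    rw [rowNorm_eq X i k] at h3
    rw [entrySum_eq _ k, ← hk]
    rw [← hk] at h1
    linarith

lemma norm_mul_mul_norm_le (X B Y : Matrix (Fin 2) (Fin 2) ℂ) (hB : B.det = 1) :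
    ‖X * (B * Y)‖ * ‖B‖ ≤ ‖X * B‖ * ‖B * Y‖ + 2 * (‖X‖ * ‖Y‖) := by
  obtain ⟨i, hi⟩ := exists_norm_eq_rowNorm (X * (B * Y))
  obtain ⟨k, hk⟩ := exists_norm_eq_rowNorm B
  rw [hi, hk]
  refine (rowNorm_mul_rowNorm_ge X B Y hB i k).trans ?_
  have h1 : rowNorm (X * B) i * rowNorm (B * Y) k ≤ ‖X * B‖ * ‖B * Y‖ := by
    gcongr
    · exact rowNorm_nonneg _ _
    · exact rowNorm_le_norm _ _
    · exact rowNorm_le_norm _ _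
  have h2 : ‖X i (k + 1)‖ * entrySum Y ≤ ‖X‖ * (2 * ‖Y‖) := by
    gcongr
    · exact (norm_nonneg Y).trans (norm_le_entrySum Y)
    · exact norm_entry_le_norm _ _ _
    · exact entrySum_le Y
  linarith

lemma norm_mul_norm_le (X B Y : Matrix (Fin 2) (Fin 2) ℂ) (hB : B.det = 1) :
    ‖X * B‖ * ‖B * Y‖ ≤ ‖X * (B * Y)‖ * ‖B‖ + 2 * (‖X‖ * ‖Y‖) := by
  obtain ⟨ξ, h0, h1, h2, -⟩ := exists_norm_mul_norm_le X B Y hB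
  have h3 : ξ * entrySum Y ≤ ‖X‖ * (2 * ‖Y‖) := by
    gcongr
    · exact (norm_nonneg Y).trans (norm_le_entrySum Y)
    · exact entrySum_le Y
  linarith

lemma norm_pos_of_det_eq_one {M : Matrix (Fin 2) (Fin 2) ℂ} (hM : M.det = 1) : 0 < ‖M‖ := by
  rw [norm_pos_iff]
  rintro rfl
  simp at hM

/-- The gap bound `‖X * B‖ ≥ ‖X‖ ‖B‖ / v`, where `‖B‖ ≥ v ^ 2`, and the state bound
`‖B‖ * entrySum Y ≤ Q v ‖B * Y‖` control the growth of the triple product `X * (B * Y)`. -/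
lemma exists_growth_bound {X B Y : Matrix (Fin 2) (Fin 2) ℂ} (hB : B.det = 1) {v Q : ℝ}
    (hv : 0 < v) (hQ : 0 ≤ Q) (hBv : v ^ 2 ≤ ‖B‖) (hgap : ‖X‖ * ‖B‖ ≤ v * ‖X * B‖)
    (hstate : ‖B‖ * entrySum Y ≤ Q * v * ‖B * Y‖) :
    ∃ ξ : ℝ, 0 ≤ ξ ∧ ξ ≤ ‖X‖ ∧
      ‖X‖ * ‖B * Y‖ ≤ v * ‖X * (B * Y)‖ + ξ * (Q / v ^ 2) * ‖B * Y‖ ∧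
      ξ * entrySum (B * Y) ≤ ‖X * (B * Y)‖ + ‖X‖ * ‖B * Y‖ := by
  obtain ⟨ξ, h0, h1, h2, h3⟩ := exists_norm_mul_norm_le X B Y hB
  refine ⟨ξ, h0, h1, ?_, h3⟩
  have hb : 0 < ‖B‖ := norm_pos_of_det_eq_one hB
  have hS : entrySum Y ≤ (Q / v ^ 2) * ‖B * Y‖ * ‖B‖ / v := by
    rw [le_div_iff₀ hv]
    have e1 : entrySum Y ≤ Q * v * ‖B * Y‖ / ‖B‖ := by
      rw [le_div_iff₀ hb]; linarith
    have e2 : Q * v * ‖B * Y‖ / ‖B‖ ≤ Q * v * ‖B * Y‖ / v ^ 2 := by gcongr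
    have e3 : Q * v * ‖B * Y‖ / v ^ 2 * v = Q * ‖B * Y‖ := by field_simp
    have e4 : Q * ‖B * Y‖ ≤ (Q / v ^ 2) * ‖B * Y‖ * ‖B‖ := by
      have : Q * ‖B * Y‖ = (Q / v ^ 2) * ‖B * Y‖ * v ^ 2 := by field_simp
      rw [this]; gcongr
    nlinarith
  have h4 : ‖X‖ * ‖B * Y‖ * ‖B‖ ≤
      (v * ‖X * (B * Y)‖ + ξ * (Q / v ^ 2) * ‖B * Y‖) * ‖B‖ := by
    calc ‖X‖ * ‖B * Y‖ * ‖B‖ = ‖X‖ * ‖B‖ * ‖B * Y‖ := by ring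
      _ ≤ v * ‖X * B‖ * ‖B * Y‖ := by gcongr
      _ = v * (‖X * B‖ * ‖B * Y‖) := by ring
      _ ≤ v * (‖X * (B * Y)‖ * ‖B‖ + ξ * ((Q / v ^ 2) * ‖B * Y‖ * ‖B‖ / v)) := by
        gcongr; exact h2.trans (by gcongr)
      _ = _ := by field_simp
  exact le_of_mul_le_mul_right h4 hb

lemma growth_lower_bound {X B Y : Matrix (Fin 2) (Fin 2) ℂ} (hB : B.det = 1) {v Q : ℝ}
    (hv : 0 < v) (hQ : 0 ≤ Q) (hQv : Q ≤ 3 / 4 * v ^ 2) (hBv : v ^ 2 ≤ ‖B‖)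
    (hgap : ‖X‖ * ‖B‖ ≤ v * ‖X * B‖)
    (hstate : ‖B‖ * entrySum Y ≤ Q * v * ‖B * Y‖) :
    ‖X‖ * ‖B * Y‖ ≤ 4 * v * ‖X * (B * Y)‖ := by
  obtain ⟨ξ, h0, h1, h2, -⟩ := exists_growth_bound hB hv hQ hBv hgap hstate
  have h3 : Q / v ^ 2 ≤ 3 / 4 := by rw [div_le_iff₀ (by positivity)]; exact hQv
  have h4 : ξ * (Q / v ^ 2) * ‖B * Y‖ ≤ ‖X‖ * (3 / 4) * ‖B * Y‖ := by gcongr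
  linarith

lemma growth_state_bound {X B Y : Matrix (Fin 2) (Fin 2) ℂ} (hB : B.det = 1) {v Q Q' e f : ℝ}
    (hv : 0 < v) (hQ : 0 ≤ Q) (hQ' : 0 ≤ Q') (hBv : v ^ 2 ≤ ‖B‖)
    (hgap : ‖X‖ * ‖B‖ ≤ v * ‖X * B‖)
    (hstate : ‖B‖ * entrySum Y ≤ Q * v * ‖B * Y‖)
    (hpos : 0 < ‖B * Y‖) (he : Q ≤ e * v ^ 2) (hf : Q ≤ f * v ^ 3)
    (hone : 1 + f ≤ Q' * (1 - e)) (htwo : 2 * (2 + f) ≤ Q' * (2 - e)) :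
    ‖X‖ * entrySum (B * Y) ≤ Q' * v * ‖X * (B * Y)‖ := by
  obtain ⟨ξ, h0, h1, h2, h3⟩ := exists_growth_bound hB hv hQ hBv hgap hstate
  have hS1 := norm_le_entrySum (B * Y)
  have hS2 := entrySum_le (B * Y)
  have hx := norm_nonneg X
  have hp' := norm_nonneg (X * (B * Y))
  set p := ‖B * Y‖
  set S := entrySum (B * Y)
  set p' := ‖X * (B * Y)‖
  set x := ‖X‖
  set E := Q / v ^ 2 with hE
  have hE0 : 0 ≤ E := by positivity
  have hEe : E ≤ e := by rw [hE, div_le_iff₀ (by positivity)]; exact he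
  have hEf : E ≤ f * v := by
    rw [hE, div_le_iff₀ (by positivity)]; linarith
  have hS : 0 < S := hpos.trans_le hS1
  -- the refined inequality `x (S - E p) ≤ p' (v S / p + E)`, cleared of denominators
  have h4 : x * p * S ≤ v * p' * S + E * p * (p' + x * p) := by
    calc x * p * S ≤ (v * p' + ξ * E * p) * S := by gcongr
      _ = v * p' * S + E * p * (ξ * S) := by ring
      _ ≤ _ := by gcongr
  -- convexity in `S / p ∈ [1, 2]`
  have h5 : S * (S + f * p) ≤ Q' * (S - e * p) * p := by
    nlinarith [mul_nonneg (sub_nonneg.2 hS1) (sub_nonneg.2 hS2),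
      mul_nonneg (mul_nonneg (sub_nonneg.2 hS1) hpos.le) (sub_nonneg.2 htwo),
      mul_nonneg (mul_nonneg (sub_nonneg.2 hS2) hpos.le) (sub_nonneg.2 hone)]
  have h6 : S * (v * S + E * p) ≤ Q' * v * (S - E * p) * p := by
    calc S * (v * S + E * p) ≤ S * (v * S + f * v * p) := by gcongr
      _ = v * (S * (S + f * p)) := by ring
      _ ≤ v * (Q' * (S - e * p) * p) := by gcongr
      _ = Q' * v * (S - e * p) * p := by ring
      _ ≤ _ := by gcongr
  have h7 : 0 < v * S + E * p := by positivity
  refine le_of_mul_le_mul_right ?_ h7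
  calc x * S * (v * S + E * p) = x * (S * (v * S + E * p)) := by ring
    _ ≤ x * (Q' * v * (S - E * p) * p) := by gcongr
    _ = Q' * v * (x * p * S - E * p * (x * p)) := by ring
    _ ≤ Q' * v * (v * p' * S + E * p * p') := by gcongr; linarith
    _ = _ := by ring

lemma det_prodDesc {A : ℕ → Matrix (Fin 2) (Fin 2) ℂ} {n : ℕ} (h : ∀ j < n, (A j).det = 1) :
    (prodDesc A n).det = 1 := by
  induction n with
  | zero => simp [prodDesc]
  | succ n ih =>
    rw [prodDesc, Matrix.det_mul, h n n.lt_succ_self, ih fun j hj => h j (hj.trans n.lt_succ_self),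
      one_mul]

/-- The state bound constants of the products of `n + 2` matrices. -/
def stateConst : ℕ → ℝ
  | 0 => 2
  | 1 => 3
  | _ + 2 => 18 / 5

lemma stateConst_nonneg (n : ℕ) : 0 ≤ stateConst n := by
  rcases n with _ | _ | n <;> norm_num [stateConst]

lemma stateConst_le {n : ℕ} {μ : ℝ} (h : (n : ℝ) + 3 ≤ μ) : stateConst n ≤ 3 / 4 * μ := by
  rcases n with _ | _ | n <;> simp only [stateConst] <;> push_cast at h
  · linarith
  · linarith
  · have : (0 : ℝ) ≤ n := n.cast_nonneg
    linarith

section Products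

variable {A : ℕ → Matrix (Fin 2) (Fin 2) ℂ} {m : ℕ} {v : ℝ}

lemma state_bound (hdet : ∀ j < m, (A j).det = 1) (hv : 0 < v) (hA : ∀ j < m, v ^ 2 ≤ ‖A j‖)
    (hm : (m : ℝ) ≤ v ^ 2)
    (hgap : ∀ j, j + 1 < m → ‖A (j + 1)‖ * ‖A j‖ ≤ v * ‖A (j + 1) * A j‖) (n : ℕ)
    (hn : n + 3 ≤ m) :
    ‖A (n + 1)‖ * entrySum (prodDesc A (n + 1)) ≤
      stateConst n * v * ‖prodDesc A (n + 2)‖ := by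
  induction n with
  | zero =>
    have h1 := hgap 0 (by omega)
    have h2 := mul_le_mul_of_nonneg_left (entrySum_le (A 0)) (norm_nonneg (A 1))
    simp only [prodDesc, stateConst, mul_one, zero_add] at h1 ⊢
    linarith
  | succ n ih =>
    have hmn : (n : ℝ) + 4 ≤ v ^ 2 := by
      refine le_trans ?_ hm
      exact_mod_cast hn
    have hpos : 0 < ‖A (n + 1) * prodDesc A (n + 1)‖ :=
      norm_pos_of_det_eq_one (det_prodDesc (n := n + 2) fun j hj => hdet j (by omega))
    have step {e f : ℝ} := growth_state_bound (e := e) (f := f) (hdet (n + 1) (by omega)) hv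
      (stateConst_nonneg n) (stateConst_nonneg (n + 1)) (hA (n + 1) (by omega))
      (hgap (n + 1) (by omega)) (ih (by omega)) hpos
    have hcube {c : ℝ} (hc : 0 ≤ c) (h : c ^ 2 ≤ v ^ 2) : c * v ^ 2 ≤ v ^ 3 := by
      have : c ≤ v := le_of_sq_le_sq h hv.le
      nlinarith [sq_nonneg v]
    rcases n with _ | _ | n <;> simp only [stateConst] at step <;> push_cast at hmn
    · have h2 := hcube (c := 2) (by norm_num) (by linarith)
      exact step (e := 1 / 2) (f := 1 / 4) (by linarith) (by linarith) (by norm_num)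
        (by norm_num)
    · have h2 := hcube (c := 223 / 100) (by norm_num) (by linarith)
      exact step (e := 3 / 5) (f := 27 / 100) (by linarith) (by linarith) (by norm_num)
        (by norm_num)
    · have h0 : (0 : ℝ) ≤ n := n.cast_nonneg
      have h2 := hcube (c := 223 / 100) (by norm_num) (by linarith)
      exact step (e := 3 / 5) (f := 27 / 100) (by linarith) (by linarith) (by norm_num)
        (by norm_num)

lemma norm_mul_norm_prodDesc_le (hdet : ∀ j < m, (A j).det = 1) (hv : 0 < v)
    (hA : ∀ j < m, v ^ 2 ≤ ‖A j‖) (hm : (m : ℝ) ≤ v ^ 2)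
    (hgap : ∀ j, j + 1 < m → ‖A (j + 1)‖ * ‖A j‖ ≤ v * ‖A (j + 1) * A j‖) (n : ℕ)
    (hn : n + 2 ≤ m) :
    ‖A (n + 1)‖ * ‖prodDesc A (n + 1)‖ ≤ 4 * v * ‖prodDesc A (n + 2)‖ := by
  rcases n with _ | n
  · have h1 := hgap 0 (by omega)
    have h2 : 0 ≤ v * ‖A 1 * A 0‖ := by positivity
    simp only [prodDesc, mul_one, zero_add] at h1 ⊢
    linarith
  · have hmn : (n : ℝ) + 3 ≤ v ^ 2 := by
      refine le_trans ?_ hm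
      exact_mod_cast hn
    exact growth_lower_bound (hdet (n + 1) (by omega)) hv (stateConst_nonneg n)
      (stateConst_le hmn) (hA (n + 1) (by omega)) (hgap (n + 1) (by omega))
      (state_bound hdet hv hA hm hgap n (by omega))

end Products

lemma log_sub_log_le {a b δ : ℝ} (ha : 0 < a) (hb : 0 < b) (h : a ≤ b + δ * b) :
    Real.log a - Real.log b ≤ δ := by
  rw [← Real.log_div ha.ne' hb.ne']
  refine (Real.log_le_sub_one_of_pos (div_pos ha hb)).trans ?_
  rw [sub_le_iff_le_add, div_le_iff₀ hb]
  linarith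

lemma abs_log_norm_triple_le {X B Y : Matrix (Fin 2) (Fin 2) ℂ} (hX : X.det = 1) (hB : B.det = 1)
    (hY : Y.det = 1) {v : ℝ} (hv : 0 < v) (hBv : v ^ 2 ≤ ‖B‖)
    (hgap : ‖X‖ * ‖B‖ ≤ v * ‖X * B‖) (hBY : ‖B‖ * ‖Y‖ ≤ 4 * v * ‖B * Y‖)
    (hXBY : ‖X‖ * ‖B * Y‖ ≤ 4 * v * ‖X * (B * Y)‖) :
    |Real.log ‖X * (B * Y)‖ + Real.log ‖B‖ - Real.log ‖X * B‖ - Real.log ‖B * Y‖| ≤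
      32 / v ^ 2 := by
  have hb := norm_pos_of_det_eq_one hB
  have hp : 0 < ‖B * Y‖ := norm_pos_of_det_eq_one (by rw [Matrix.det_mul, hB, hY, one_mul])
  have hh : 0 < ‖X * B‖ := norm_pos_of_det_eq_one (by rw [Matrix.det_mul, hX, hB, one_mul])
  have hp' : 0 < ‖X * (B * Y)‖ :=
    norm_pos_of_det_eq_one (by rw [Matrix.det_mul, Matrix.det_mul, hX, hB, hY, one_mul, one_mul])
  have hu := norm_mul_mul_norm_le X B Y hB
  have hl := norm_mul_norm_le X B Y hB
  have hx := norm_nonneg X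
  have hy := norm_nonneg Y
  set b := ‖B‖
  set p := ‖B * Y‖
  set h := ‖X * B‖
  set p' := ‖X * (B * Y)‖
  set x := ‖X‖
  set y := ‖Y‖
  clear_value b p h p' x y
  have upper : 2 * (x * y) ≤ 32 / v ^ 2 * (h * p) := by
    have e : x * y * v ^ 2 ≤ 4 * (h * p) := by
      refine le_of_mul_le_mul_right ?_ (show 0 < v ^ 2 by positivity)
      calc x * y * v ^ 2 * v ^ 2 ≤ x * y * b * b := by gcongr
        _ = (x * b) * (b * y) := by ring
        _ ≤ (v * h) * (4 * v * p) := by gcongr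
        _ = _ := by ring
    have := mul_pos hh hp
    rw [div_mul_eq_mul_div, le_div_iff₀ (by positivity)]
    linarith
  have lower : 2 * (x * y) ≤ 32 / v ^ 2 * (p' * b) := by
    have e : x * y * b ≤ 16 * v ^ 2 * p' := by
      refine le_of_mul_le_mul_right ?_ hp
      calc x * y * b * p = (x * p) * (b * y) := by ring
        _ ≤ (4 * v * p') * (4 * v * p) := by gcongr
        _ = _ := by ring
    have e' : x * y * v ^ 2 ≤ 16 * (p' * b) := by
      calc x * y * v ^ 2 ≤ x * y * b := by gcongr
        _ ≤ 16 * v ^ 2 * p' := e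
        _ ≤ 16 * b * p' := by gcongr
        _ = _ := by ring
    rw [div_mul_eq_mul_div, le_div_iff₀ (by positivity)]
    linarith
  have h1 := log_sub_log_le (mul_pos hp' hb) (mul_pos hh hp) (hu.trans (by gcongr))
  have h2 := log_sub_log_le (mul_pos hh hp) (mul_pos hp' hb) (hl.trans (by gcongr))
  rw [Real.log_mul hp'.ne' hb.ne', Real.log_mul hh.ne' hp.ne'] at h1 h2
  rw [abs_le]
  constructor <;> linarith

lemma abs_log_norm_prodDesc_le {A : ℕ → Matrix (Fin 2) (Fin 2) ℂ} {m : ℕ} {v : ℝ}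
    (hdet : ∀ j < m, (A j).det = 1) (hv : 0 < v)
    (hA : ∀ j < m, v ^ 2 ≤ ‖A j‖) (hm : (m : ℝ) ≤ v ^ 2)
    (hgap : ∀ j, j + 1 < m → ‖A (j + 1)‖ * ‖A j‖ ≤ v * ‖A (j + 1) * A j‖) (n : ℕ)
    (hn : n + 2 ≤ m) :
    |Real.log ‖prodDesc A (n + 2)‖ + (∑ j ∈ Finset.Ico 1 (n + 1), Real.log ‖A j‖) -
        ∑ j ∈ Finset.range (n + 1), Real.log ‖A (j + 1) * A j‖| ≤ n * (32 / v ^ 2) := by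
  induction n with
  | zero => simp [prodDesc]
  | succ n ih =>
    have hstep := abs_log_norm_triple_le (hdet (n + 2) (by omega)) (hdet (n + 1) (by omega))
      (det_prodDesc (n := n + 1) fun j hj => hdet j (by omega)) hv (hA (n + 1) (by omega))
      (hgap (n + 1) (by omega))
      (norm_mul_norm_prodDesc_le hdet hv hA hm hgap n (by omega))
      (norm_mul_norm_prodDesc_le hdet hv hA hm hgap (n + 1) (by omega))
    have h := (abs_add_le _ _).trans (add_le_add (ih (by omega)) hstep)
    rw [Finset.sum_Ico_succ_top (by omega), Finset.sum_range_succ]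
    push_cast
    rw [add_mul, one_mul]
    change |Real.log ‖A (n + 2) * (A (n + 1) * prodDesc A (n + 1))‖ + _ - _| ≤ _
    change |Real.log ‖A (n + 1) * prodDesc A (n + 1)‖ + _ - _ + _| ≤ _ at h
    convert h using 2
    ring


/-- **Avalanche Principle** (Goldstein–Schlag).  With matrices indexed `A 0, …, A (m-1)`
(corresponding to `A₁, …, A_m`): if every `‖A j‖ ≥ μ ≥ m` and consecutive products do not
lose more than `(1/2) log μ`, then
`|log‖A_m ⋯ A₁‖ + Σ_{j=2}^{m−1} log‖A_j‖ − Σ_{j=1}^{m−1} log‖A_{j+1}A_j‖| < C_A · m/μ`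
for an absolute constant `C_A`. -/
theorem avalanche_principle :
    ∃ C_A : ℝ, 0 < C_A ∧
      ∀ (m : ℕ) (A : ℕ → Matrix (Fin 2) (Fin 2) ℂ) (μ : ℝ),
        2 ≤ m →
        (∀ j < m, (A j).det = 1) →
        (∀ j < m, μ ≤ ‖A j‖) →
        (m : ℝ) ≤ μ →
        (∀ j, j + 1 < m →
          Real.log ‖A (j + 1)‖ + Real.log ‖A j‖ - Real.log ‖A (j + 1) * A j‖ <
            (1 / 2) * Real.log μ) →
        |Real.log ‖prodDesc A m‖ + (∑ j ∈ Finset.Ico 1 (m - 1), Real.log ‖A j‖) -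
            ∑ j ∈ Finset.range (m - 1), Real.log ‖A (j + 1) * A j‖| <
          C_A * (m : ℝ) / μ := by
  refine ⟨32, by norm_num, fun m A μ hm hdet hA hmμ hgap => ?_⟩
  have hμ : 0 < μ := lt_of_lt_of_le (by positivity) hmμ
  have hsq : √μ ^ 2 = μ := Real.sq_sqrt hμ.le
  have hgap' (j : ℕ) (hj : j + 1 < m) : ‖A (j + 1)‖ * ‖A j‖ ≤ √μ * ‖A (j + 1) * A j‖ := by
    have d1 := hdet (j + 1) hj
    have d0 := hdet j (by omega)
    have p1 := norm_pos_of_det_eq_one d1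
    have p0 := norm_pos_of_det_eq_one d0
    have p : 0 < ‖A (j + 1) * A j‖ :=
      norm_pos_of_det_eq_one (by rw [Matrix.det_mul, d1, d0, one_mul])
    have hs : 0 < √μ := Real.sqrt_pos.2 hμ
    rw [← Real.log_le_log_iff (by positivity) (by positivity), Real.log_mul p1.ne' p0.ne',
      Real.log_mul hs.ne' p.ne', Real.log_sqrt hμ.le]
    linarith [hgap j hj]
  obtain ⟨n, rfl⟩ := Nat.exists_eq_add_of_le' hm
  have h := abs_log_norm_prodDesc_le hdet (Real.sqrt_pos.2 hμ) (by rwa [hsq]) (by rwa [hsq]) hgap'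
    n le_rfl
  rw [hsq] at h
  refine h.trans_lt ?_
  rw [← mul_div_assoc, div_lt_div_iff_of_pos_right hμ]
  push_cast
  linarith

end
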